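/- Fix m < 1 with m ≠ 0. Then (1/(4K(m))) ∫₀^{4K(m)} sn(t, m)² dt = (K(m) − E(m))/(m K(m)), i.e. the average of sn(·, m)² over its period 4K(m) equals (K(m) − E(m))/(m K(m)). -/

import Mathlib

open Real

/-- Incomplete elliptic integral of the first kind `F(φ, m)`. -/
noncomputable def Fm (m φ : ℝ) : ℝ := ∫ θ in (0:ℝ)..φ, 1 / Real.sqrt (1 - m * Real.sin θ ^ 2)

/-- Complete elliptic integral of the first kind `K(m) = F(π/2, m)`. -/
noncomputable def Kc (m : ℝ) : ℝ := Fm m (π / 2)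

/-- Complete elliptic integral of the second kind (parameter `m`). -/
noncomputable def Ec (m : ℝ) : ℝ := ∫ θ in (0:ℝ)..(π / 2), Real.sqrt (1 - m * Real.sin θ ^ 2)

/-- The Jacobi elliptic sine `sn(t, m) = sin(F_m⁻¹(t))`. -/
noncomputable def sn (t m : ℝ) : ℝ := Real.sin (Function.invFun (Fm m) t)

theorem one_sub_mul_sin_sq_pos {m : ℝ} (hm : m < 1) (θ : ℝ) : 0 < 1 - m * sin θ ^ 2 := by
  rcases le_total m 0 with h | h
  · nlinarith [sq_nonneg (sin θ)]
  · nlinarith [sin_sq_le_one θ]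

theorem continuous_one_div_sqrt_one_sub_mul_sin_sq {m : ℝ} (hm : m < 1) :
    Continuous fun θ : ℝ => 1 / √(1 - m * sin θ ^ 2) :=
  continuous_const.div (by fun_prop) fun θ => (sqrt_pos.2 (one_sub_mul_sin_sq_pos hm θ)).ne'

theorem hasDerivAt_Fm {m : ℝ} (hm : m < 1) (φ : ℝ) :
    HasDerivAt (Fm m) (1 / √(1 - m * sin φ ^ 2)) φ :=
  (continuous_one_div_sqrt_one_sub_mul_sin_sq hm).integral_hasStrictDerivAt 0 φ |>.hasDerivAt

theorem strictMono_Fm {m : ℝ} (hm : m < 1) : StrictMono (Fm m) :=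
  strictMono_of_deriv_pos fun φ => by
    rw [(hasDerivAt_Fm hm φ).deriv]
    exact one_div_pos.2 (sqrt_pos.2 (one_sub_mul_sin_sq_pos hm φ))

theorem continuous_Fm {m : ℝ} (hm : m < 1) : Continuous (Fm m) :=
  continuous_iff_continuousAt.2 fun φ => (hasDerivAt_Fm hm φ).continuousAt

theorem Fm_zero (m : ℝ) : Fm m 0 = 0 := intervalIntegral.integral_same

theorem Kc_pos {m : ℝ} (hm : m < 1) : 0 < Kc m := by
  have h := strictMono_Fm hm (half_pos pi_pos)
  rwa [Fm_zero] at h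

theorem sn_Fm {m : ℝ} (hm : m < 1) (φ : ℝ) : sn (Fm m φ) m = sin φ :=
  congrArg sin (Function.leftInverse_invFun (strictMono_Fm hm).injective φ)

/-- The integral over `[0, 2π]` of a continuous function that is `π`-periodic and symmetric about
`π / 2` is four times its integral over `[0, π / 2]`. -/
theorem integral_zero_two_pi_eq_four_mul {f : ℝ → ℝ} (hf : Continuous f)
    (hper : Function.Periodic f π) (hsymm : ∀ x, f (π - x) = f x) :
    ∫ x in (0:ℝ)..(2 * π), f x = 4 * ∫ x in (0:ℝ)..(π / 2), f x := by
  have hint (a b : ℝ) : IntervalIntegrable f MeasureTheory.volume a b := hf.intervalIntegrable a b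
  have hhalf : ∫ x in (π / 2)..π, f x = ∫ x in (0:ℝ)..(π / 2), f x := by
    have h := intervalIntegral.integral_comp_sub_left (a := 0) (b := π / 2) f π
    simp only [hsymm, sub_zero, sub_half] at h
    exact h.symm
  have hshift : ∫ x in π..(2 * π), f x = ∫ x in (0:ℝ)..π, f x := by
    have h := hper.intervalIntegral_add_eq π 0
    rwa [zero_add, ← two_mul] at h
  rw [← intervalIntegral.integral_add_adjacent_intervals (hint 0 π) (hint π (2 * π)), hshift,
    ← intervalIntegral.integral_add_adjacent_intervals (hint 0 (π / 2)) (hint (π / 2) π), hhalf]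
  ring

theorem Fm_two_pi {m : ℝ} (hm : m < 1) : Fm m (2 * π) = 4 * Kc m :=
  integral_zero_two_pi_eq_four_mul (continuous_one_div_sqrt_one_sub_mul_sin_sq hm)
    (fun x => by simp [sin_add_pi]) fun x => by simp [sin_pi_sub]

theorem integral_comp_Fm {m a b : ℝ} (hm : m < 1) (hab : a ≤ b) (g : ℝ → ℝ) :
    ∫ t in (Fm m a)..(Fm m b), g t = ∫ θ in a..b, 1 / √(1 - m * sin θ ^ 2) * g (Fm m θ) := by
  have hmono := (strictMono_Fm hm).monotone
  rw [intervalIntegral.integral_of_le (hmono hab), intervalIntegral.integral_of_le hab,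
    ← MeasureTheory.integral_Icc_eq_integral_Ioc, ← MeasureTheory.integral_Icc_eq_integral_Ioc,
    ← (continuous_Fm hm).continuousOn.image_Icc_of_monotoneOn hab (hmono.monotoneOn _)]
  exact MeasureTheory.integral_image_eq_integral_deriv_smul_of_monotoneOn measurableSet_Icc
    (fun θ _ => (hasDerivAt_Fm hm θ).hasDerivWithinAt) (hmono.monotoneOn _) g

theorem mul_integral_sin_sq_div_sqrt {m : ℝ} (hm : m < 1) :
    m * ∫ θ in (0:ℝ)..(π / 2), 1 / √(1 - m * sin θ ^ 2) * sin θ ^ 2 = Kc m - Ec m := by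
  rw [Kc, Fm, Ec, ← intervalIntegral.integral_const_mul, ← intervalIntegral.integral_sub
    ((continuous_one_div_sqrt_one_sub_mul_sin_sq hm).intervalIntegrable _ _)
    (Continuous.intervalIntegrable (by fun_prop) _ _)]
  refine intervalIntegral.integral_congr fun θ _ => ?_
  have hpos := one_sub_mul_sin_sq_pos hm θ
  have hne := (sqrt_pos.2 hpos).ne'
  have hsq := sq_sqrt hpos.le
  field_simp
  linarith

theorem integral_sn_sq {m : ℝ} (hm : m < 1) :
    ∫ t in (0:ℝ)..(4 * Kc m), sn t m ^ 2 =
      4 * ∫ θ in (0:ℝ)..(π / 2), 1 / √(1 - m * sin θ ^ 2) * sin θ ^ 2 := by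
  have h := integral_comp_Fm hm two_pi_pos.le fun t => sn t m ^ 2
  simp only [Fm_zero, Fm_two_pi hm, sn_Fm hm] at h
  rw [h]
  exact integral_zero_two_pi_eq_four_mul
    ((continuous_one_div_sqrt_one_sub_mul_sin_sq hm).mul (by fun_prop))
    (fun x => by simp [sin_add_pi]) fun x => by simp [sin_pi_sub]

theorem stmt_9 (m : ℝ) (hm : m < 1) (hm0 : m ≠ 0) :
    (1 / (4 * Kc m)) * ∫ t in (0:ℝ)..(4 * Kc m), sn t m ^ 2
      = (Kc m - Ec m) / (m * Kc m) := by
  have hK := (Kc_pos hm).ne'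
  rw [integral_sn_sq hm, ← mul_integral_sin_sq_div_sqrt hm]
  field_simp
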